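/- Let N₁, N₂ be commuting bounded operators on a Hilbert space with N₁² + N₂² = 1. Assign to each edge of the hexagonal graph on S₃ the operators: Q_{1,s₁} = N₁, Q_{1,s₂} = N₂, Q_{s₁,s₁s₂} = -N₁N₂, Q_{s₁,s₂s₁} = -N₂², Q_{s₂,s₂s₁} = N₁N₂, Q_{s₂,s₁s₂} = N₁², Q_{s₁s₂,w_ρ} = -N₂, Q_{s₂s₁,w_ρ} = N₁ (and Q_{w',w} = Q_{w,w'}). Then for all w, w'' in S₃: Σ_{w' : w↔w'↔w''} Q_{w',w''} Q_{w,w'} = δ_{w,w''} · 1, where the sum runs over vertices w' adjacent to both w and w''. -/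

import Mathlib

open scoped Classical

/-- The simple reflection `s₁` of `S₃`. -/
def s1 : Equiv.Perm (Fin 3) := Equiv.swap 0 1

/-- The simple reflection `s₂` of `S₃`. -/
def s2 : Equiv.Perm (Fin 3) := Equiv.swap 1 2

/-- The longest element `w_ρ = s₁s₂s₁`. -/
def wρ : Equiv.Perm (Fin 3) := s1 * s2 * s1

/-- The (unordered) edges of the hexagonal Bruhat graph of `S₃`. -/
def hexAdj (w w' : Equiv.Perm (Fin 3)) : Prop :=
  ((w, w') : Equiv.Perm (Fin 3) × Equiv.Perm (Fin 3)) ∈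
    ({(1, s1), (s1, 1), (1, s2), (s2, 1),
      (s1, s1 * s2), (s1 * s2, s1), (s1, s2 * s1), (s2 * s1, s1),
      (s2, s2 * s1), (s2 * s1, s2), (s2, s1 * s2), (s1 * s2, s2),
      (s1 * s2, wρ), (wρ, s1 * s2), (s2 * s1, wρ), (wρ, s2 * s1)} :
      Set (Equiv.Perm (Fin 3) × Equiv.Perm (Fin 3)))

theorem univ_S3 : (Finset.univ : Finset (Equiv.Perm (Fin 3)))
    = {1, s1, s2, s1 * s2, s2 * s1, wρ} := by
  ext w
  have : ∀ w : Equiv.Perm (Fin 3), w = 1 ∨ w = s1 ∨ w = s2 ∨ w = s1 * s2 ∨ w = s2 * s1 ∨ w = wρ := by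
    decide
  simpa using this w

theorem nodup_S3 : [1, s1, s2, s1 * s2, s2 * s1, wρ].Nodup := by
  decide

/-- The relations in a ring needed for the vertices. -/
theorem ring_rel {R : Type*} [Ring R] (a b : R) (hc : a * b = b * a) (hs : a ^ 2 + b ^ 2 = 1) :
    b * b = 1 - a * a ∧ b * a = a * b ∧ (∀ x, b * (b * x) = x - a * (a * x)) ∧
    (∀ x, b * (a * x) = a * (b * x)) := by
  have h : b * b = 1 - a * a := by rw [← hs]; noncomm_ring
  refine ⟨h, hc.symm, fun x => ?_, fun x => ?_⟩
  · rw [← mul_assoc, h]; noncomm_ring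
  · rw [← mul_assoc, ← hc, mul_assoc]

set_option maxHeartbeats 4000000 in
/-- Let `N₁, N₂` be commuting bounded operators with `N₁² + N₂² = 1`, and assign operators
`Q_{w,w'}` to the edges of the hexagonal Bruhat graph of `S₃` as indicated.  Then for all
`w, w''`:  `Σ_{w' : w↔w'↔w''} Q_{w',w''} Q_{w,w'} = δ_{w,w''}`. -/
theorem stmt11 {H : Type*} [NormedAddCommGroup H] [InnerProductSpace ℂ H] [CompleteSpace H]
    (N₁ N₂ : H →L[ℂ] H) (hcomm : N₁ * N₂ = N₂ * N₁) (hsum : N₁ ^ 2 + N₂ ^ 2 = 1)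
    (Q : Equiv.Perm (Fin 3) → Equiv.Perm (Fin 3) → (H →L[ℂ] H))
    (hQsymm : ∀ w w', Q w w' = Q w' w)
    (h1 : Q 1 s1 = N₁) (h2 : Q 1 s2 = N₂)
    (h3 : Q s1 (s1 * s2) = -(N₁ * N₂)) (h4 : Q s1 (s2 * s1) = -(N₂ ^ 2))
    (h5 : Q s2 (s2 * s1) = N₁ * N₂) (h6 : Q s2 (s1 * s2) = N₁ ^ 2)
    (h7 : Q (s1 * s2) wρ = -N₂) (h8 : Q (s2 * s1) wρ = N₁) :
    ∀ w w'' : Equiv.Perm (Fin 3),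
      (∑ w' : Equiv.Perm (Fin 3),
        if hexAdj w w' ∧ hexAdj w' w'' then Q w' w'' * Q w w' else 0)
      = if w = w'' then 1 else 0 := by
  intro w w''
  obtain ⟨r1, r2, r3, r4⟩ := ring_rel N₁ N₂ hcomm hsum
  have hw : ∀ w : Equiv.Perm (Fin 3),
      w = 1 ∨ w = s1 ∨ w = s2 ∨ w = s1 * s2 ∨ w = s2 * s1 ∨ w = wρ := by
    intro w
    have := Finset.mem_univ w
    rw [univ_S3] at this
    simpa using this
  have hA := hw w
  have hB := hw w''
  clear hw
  have hnd := nodup_S3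
  rw [univ_S3]
  unfold hexAdj
  have h1' := (hQsymm _ _).symm.trans h1
  have h2' := (hQsymm _ _).symm.trans h2
  have h3' := (hQsymm _ _).symm.trans h3
  have h4' := (hQsymm _ _).symm.trans h4
  have h5' := (hQsymm _ _).symm.trans h5
  have h6' := (hQsymm _ _).symm.trans h6
  have h7' := (hQsymm _ _).symm.trans h7
  have h8' := (hQsymm _ _).symm.trans h8
  generalize s1 * s2 = d at *
  generalize s2 * s1 = e at *
  generalize wρ = f at *
  generalize s1 = b at *
  generalize s2 = c at *
  generalize (1 : Equiv.Perm (Fin 3)) = a at *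
  simp only [List.nodup_cons, List.mem_cons, List.not_mem_nil, not_or, or_false,
    not_false_eq_true, List.nodup_nil, and_true] at hnd
  obtain ⟨⟨n1, n2, n3, n4, n5⟩, ⟨n6, n7, n8, n9⟩, ⟨n10, n11, n12⟩, ⟨n13, n14⟩, n15⟩ := hnd
  have m1 := Ne.symm n1
  have m2 := Ne.symm n2
  have m3 := Ne.symm n3
  have m4 := Ne.symm n4
  have m5 := Ne.symm n5
  have m6 := Ne.symm n6
  have m7 := Ne.symm n7
  have m8 := Ne.symm n8
  have m9 := Ne.symm n9
  have m10 := Ne.symm n10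
  have m11 := Ne.symm n11
  have m12 := Ne.symm n12
  have m13 := Ne.symm n13
  have m14 := Ne.symm n14
  have m15 := Ne.symm n15
  rcases hA with rfl | rfl | rfl | rfl | rfl | rfl <;>
  rcases hB with rfl | rfl | rfl | rfl | rfl | rfl <;>
  simp [Finset.sum_insert, *, -hcomm, -hsum, -hQsymm] <;>
  (try simp only [pow_two, mul_assoc, r1, r2, r3, r4, mul_sub, sub_mul, mul_one, one_mul]) <;>
  (try abel)
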